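/- arXiv:2604.26392 — 3 statements merged into one kernel-verified Lean document; each statement's English description precedes it below -/
import Mathlib

section
/- Let d ≥ 2 and let i, k, m, p ∈ {1,…,d}. Then, with respect to the Haar probability measure μ_O on the real orthogonal group O(d), ∫_{O(d)} O_{ki} O_{km} O_{pi} O_{pm} dμ_O(O) = c₁·(δ_{im} + δ_{kp} + δ_{im}δ_{kp}) − c₂·(1 + δ_{im} + δ_{kp} + 3δ_{im}δ_{kp}), where c₁ = (d+1)/(d(d−1)(d+2)) and c₂ = 1/(d(d−1)(d+2)). -/
open MeasureTheory Matrix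

noncomputable section

instance (d : ℕ) : MeasurableSpace (Matrix.orthogonalGroup (Fin d) ℝ) := borel _

/-- Kronecker delta on `Fin d`, valued in `ℝ`. -/
def kdelta {d : ℕ} (i j : Fin d) : ℝ := if i = j then 1 else 0

/-!
Haar measure is invariant under left multiplication by sign changes and permutations of the rows,
and by reflections, which can move any row vector `a` to any other of the same length without
changing the law of `a ᵥ* O`. Hence, as a function of its row indices, the fourth moment
`∫ O_{ki} O_{lj} O_{pm} O_{qn}` is an isotropic tensor
`α δ_{kl} δ_{pq} + β δ_{kp} δ_{lq} + γ δ_{kq} δ_{lp}`. Contracting two row indices, where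
orthonormality of the columns reduces the fourth moment to a second moment, gives three linear
equations that determine `α`, `β` and `γ`.
-/

variable {ι τ : Type*} [Fintype ι] [DecidableEq ι] [Fintype τ]

instance compactSpace_unitaryGroup {𝕜 : Type*} [RCLike 𝕜] : CompactSpace (unitaryGroup ι 𝕜) := by
  refine isCompact_iff_compactSpace.mp
    ((isCompact_closedBall (0 : 𝕜) 1).matrix.of_isClosed_subset isClosed_unitary fun U hU i j => ?_)
  simpa using entry_norm_bound_of_unitary hU i j

lemma diagonal_mem_orthogonalGroup {R : Type*} [CommRing R] {s : ι → R} (hs : ∀ x, s x * s x = 1) :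
    diagonal s ∈ orthogonalGroup ι R := by
  simp [mem_orthogonalGroup_iff, hs]

lemma permMatrix_mem_orthogonalGroup {R : Type*} [CommRing R] (σ : Equiv.Perm ι) :
    σ.permMatrix R ∈ orthogonalGroup ι R := by
  rw [mem_orthogonalGroup_iff, transpose_permMatrix, ← permMatrix_mul, inv_mul_cancel,
    permMatrix_one]

/-- The Householder matrix of `w`: the reflection in the hyperplane orthogonal to `w`,
and the identity if `w ⬝ᵥ w = 0`. -/
def householder {K : Type*} [Field K] (w : ι → K) : Matrix ι ι K :=
  1 - (2 / (w ⬝ᵥ w)) • vecMulVec w w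

lemma householder_mem_orthogonalGroup {K : Type*} [Field K] (w : ι → K) :
    householder w ∈ orthogonalGroup ι K := by
  rcases eq_or_ne (w ⬝ᵥ w) 0 with hw | hw
  · simp [householder, hw, one_mem]
  have hsq : vecMulVec w w * vecMulVec w w = (w ⬝ᵥ w) • vecMulVec w w := by
    rw [vecMulVec_mul_vecMulVec, vecMulVec_smul]
  simp only [mem_orthogonalGroup_iff, householder, transpose_sub, transpose_one, transpose_smul,
    transpose_vecMulVec, sub_mul, mul_sub, one_mul, mul_one, smul_mul_smul_comm, hsq, smul_smul]
  have hcoeff : 2 / (w ⬝ᵥ w) * (2 / (w ⬝ᵥ w)) * (w ⬝ᵥ w) = 2 * (2 / (w ⬝ᵥ w)) := by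
    field_simp
  rw [hcoeff]
  module

lemma vecMul_householder_sub {K : Type*} [Field K] {a b : ι → K} (h : a ⬝ᵥ a = b ⬝ᵥ b)
    (hab : (a - b) ⬝ᵥ (a - b) ≠ 0) : a ᵥ* householder (a - b) = b := by
  have hproj : 2 / ((a - b) ⬝ᵥ (a - b)) * (a ⬝ᵥ (a - b)) = 1 := by
    rw [div_mul_eq_mul_div, div_eq_one_iff_eq hab]
    simp only [dotProduct_sub, sub_dotProduct, dotProduct_comm b a, h]
    ring
  rw [householder, vecMul_sub, vecMul_one, vecMul_smul, vecMul_vecMulVec, smul_smul, hproj,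
    one_smul, sub_sub_cancel]

lemma exists_mem_orthogonalGroup_vecMul_eq {K : Type*} [Field K] [LinearOrder K]
    [IsStrictOrderedRing K] {a b : ι → K} (h : a ⬝ᵥ a = b ⬝ᵥ b) :
    ∃ U ∈ orthogonalGroup ι K, a ᵥ* U = b := by
  rcases eq_or_ne a b with rfl | hab
  · exact ⟨1, one_mem _, vecMul_one a⟩
  · exact ⟨_, householder_mem_orthogonalGroup _,
      vecMul_householder_sub h (dotProduct_self_eq_zero.not.mpr (sub_ne_zero.mpr hab))⟩

lemma sum_mul_apply_eq_one_apply {R : Type*} [CommRing R] (O : orthogonalGroup ι R) (i j : ι) :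
    ∑ x, O.1 x i * O.1 x j = (1 : Matrix ι ι R) i j := by
  simpa [mul_apply] using congr_fun₂ ((mem_orthogonalGroup_iff' ι R).mp O.2) i j

@[fun_prop]
lemma continuous_unitaryGroup_apply {R : Type*} [CommRing R] [StarRing R] [TopologicalSpace R]
    (k i : ι) : Continuous fun U : unitaryGroup ι R => U.1 k i :=
  continuous_subtype_val.matrix_elem k i

lemma integrable_of_continuous_of_compactSpace {X E : Type*} [TopologicalSpace X] [CompactSpace X]
    [MeasurableSpace X] [OpensMeasurableSpace X] [NormedAddCommGroup E]
    [SecondCountableTopologyEither X E] {ν : Measure X} [IsFiniteMeasureOnCompacts ν] {f : X → E}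
    (hf : Continuous f) : Integrable f ν :=
  hf.integrable_of_hasCompactSupport (.of_compactSpace f)

variable [MeasurableSpace (orthogonalGroup ι ℝ)] (μ : Measure (orthogonalGroup ι ℝ))

/-- The mixed moment of the entries of `O` at the positions `(r t, c t)`, `t : τ`. -/
def entryMoment (r c : τ → ι) : ℝ := ∫ O : orthogonalGroup ι ℝ, ∏ t, O.1 (r t) (c t) ∂μ

local notation "δ" => (1 : Matrix _ _ ℝ)

variable [BorelSpace (orthogonalGroup ι ℝ)]

lemma sum_integral_mul_mul_eq [IsFiniteMeasure μ] {f : orthogonalGroup ι ℝ → ℝ}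
    (hf : Continuous f) (i j : ι) :
    ∑ x, ∫ O, O.1 x i * O.1 x j * f O ∂μ = δ i j * ∫ O, f O ∂μ := by
  rw [← integral_finsetSum _ fun x _ => integrable_of_continuous_of_compactSpace (by fun_prop)]
  simp_rw [← Finset.sum_mul, sum_mul_apply_eq_one_apply, integral_const_mul]

variable [μ.IsMulLeftInvariant]

lemma integral_orthogonalGroup_mul_eq {U : Matrix ι ι ℝ} (hU : U ∈ orthogonalGroup ι ℝ)
    (f : Matrix ι ι ℝ → ℝ) :
    ∫ O : orthogonalGroup ι ℝ, f (U * O.1) ∂μ = ∫ O : orthogonalGroup ι ℝ, f O.1 ∂μ :=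
  integral_mul_left_eq_self (fun O : orthogonalGroup ι ℝ => f O.1) ⟨U, hU⟩

lemma integral_vecMul_eq_of_dotProduct_self_eq {a b : ι → ℝ} (h : a ⬝ᵥ a = b ⬝ᵥ b)
    (f : (ι → ℝ) → ℝ) :
    ∫ O : orthogonalGroup ι ℝ, f (a ᵥ* O.1) ∂μ = ∫ O : orthogonalGroup ι ℝ, f (b ᵥ* O.1) ∂μ := by
  obtain ⟨U, hU, rfl⟩ := exists_mem_orthogonalGroup_vecMul_eq h
  simpa only [vecMul_vecMul] using (integral_orthogonalGroup_mul_eq μ hU fun A => f (a ᵥ* A)).symm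

lemma entryMoment_perm_comp (σ : Equiv.Perm ι) (r c : τ → ι) :
    entryMoment μ (σ ∘ r) c = entryMoment μ r c := by
  simpa only [entryMoment, Function.comp_apply, PEquiv.toMatrix_toPEquiv_mul, submatrix_apply,
    id] using
    integral_orthogonalGroup_mul_eq μ (permMatrix_mem_orthogonalGroup σ) fun A => ∏ t, A (r t) (c t)

lemma entryMoment_comp_eq_of_injective {κ : Type*} [Finite κ] {f g : κ → ι}
    (hf : Function.Injective f) (hg : Function.Injective g) (e : τ → κ) (c : τ → ι) :
    entryMoment μ (f ∘ e) c = entryMoment μ (g ∘ e) c := by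
  obtain ⟨σ, hσ⟩ := Equiv.Perm.exists_extending_pair f g hf hg
  rw [← entryMoment_perm_comp μ σ, ← Function.comp_assoc, show σ ∘ f = g from funext hσ]

/-- Changing the sign of the row `x` of `O` changes the sign of the integrand. -/
lemma entryMoment_eq_zero_of_odd {r : τ → ι} {x : ι} (hx : Odd (Finset.card {t | r t = x}))
    (c : τ → ι) :
    entryMoment μ r c = 0 := by
  have hflip := integral_orthogonalGroup_mul_eq μ
    (diagonal_mem_orthogonalGroup (s := fun y => if y = x then (-1 : ℝ) else 1)
      fun y => by split_ifs <;> norm_num)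
    fun A => ∏ t, A (r t) (c t)
  have hsign : ∏ t, (if r t = x then (-1 : ℝ) else 1) = -1 := by
    simp [Finset.prod_ite, hx.neg_one_pow]
  simp_rw [diagonal_mul, Finset.prod_mul_distrib, hsign, integral_const_mul] at hflip
  rw [entryMoment]
  linarith

lemma integral_prod_vecMul_eq (a : ι → ℝ) (k : ι) (c : τ → ι) :
    ∫ O : orthogonalGroup ι ℝ, ∏ t, (a ᵥ* O.1) (c t) ∂μ =
      √(a ⬝ᵥ a) ^ Fintype.card τ * entryMoment μ (fun _ => k) c := by
  have hnonneg : 0 ≤ a ⬝ᵥ a := by simpa using dotProduct_star_self_nonneg a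
  have hnorm : a ⬝ᵥ a = (√(a ⬝ᵥ a) • Pi.single k 1) ⬝ᵥ (√(a ⬝ᵥ a) • Pi.single k 1) := by
    simp [Real.mul_self_sqrt hnonneg]
  rw [integral_vecMul_eq_of_dotProduct_self_eq μ hnorm fun v => ∏ t, v (c t)]
  simp [smul_vecMul, Finset.prod_mul_distrib, integral_const_mul, entryMoment]

lemma card_mul_entryMoment_two [IsProbabilityMeasure μ] (k l i j : ι) :
    Fintype.card ι * entryMoment μ ![k, l] ![i, j] = δ k l * δ i j := by
  rcases eq_or_ne k l with rfl | hkl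
  · have hrow (x : ι) : ∫ O, O.1 x i * O.1 x j ∂μ = ∫ O, O.1 k i * O.1 k j ∂μ := by
      simpa [entryMoment] using entryMoment_comp_eq_of_injective μ (f := fun _ : Unit => x)
        (g := fun _ => k) (Function.injective_of_subsingleton _)
        (Function.injective_of_subsingleton _) (fun _ => ()) ![i, j]
    simpa [entryMoment, hrow] using sum_integral_mul_mul_eq μ (f := fun _ => 1) continuous_const i j
  · rw [entryMoment_eq_zero_of_odd μ (x := k), one_apply_ne hkl, mul_zero, zero_mul]
    simp [Fin.card_filter_univ_succ, hkl.symm]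

lemma card_mul_sum_entryMoment_xxpp [IsProbabilityMeasure μ] (p i j m n : ι) :
    Fintype.card ι * ∑ x, entryMoment μ ![x, x, p, p] ![i, j, m, n] = δ i j * δ m n := by
  have htwo : Fintype.card ι * ∫ O, O.1 p m * O.1 p n ∂μ = δ m n := by
    simpa [entryMoment] using card_mul_entryMoment_two μ p p m n
  have hsum := sum_integral_mul_mul_eq μ (f := fun O => O.1 p m * O.1 p n) (by fun_prop) i j
  simp only [entryMoment, Fin.prod_univ_four, cons_val, mul_assoc] at hsum ⊢
  rw [hsum, mul_left_comm, htwo]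

lemma card_mul_sum_entryMoment_xpxp [IsProbabilityMeasure μ] (p i j m n : ι) :
    Fintype.card ι * ∑ x, entryMoment μ ![x, p, x, p] ![i, j, m, n] = δ i m * δ j n := by
  simpa [entryMoment, Fin.prod_univ_four, mul_assoc, mul_left_comm] using
    card_mul_sum_entryMoment_xxpp μ p i m j n

lemma card_mul_sum_entryMoment_xppx [IsProbabilityMeasure μ] (p i j m n : ι) :
    Fintype.card ι * ∑ x, entryMoment μ ![x, p, p, x] ![i, j, m, n] = δ i n * δ j m := by
  simpa [entryMoment, Fin.prod_univ_four, mul_assoc, mul_left_comm, mul_comm] using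
    card_mul_sum_entryMoment_xxpp μ p i n j m

lemma integral_prod_apply_add_mul_apply_eq {k p : ι} (hkp : k ≠ p) {ε : ℝ} (hε : ε * ε = 1)
    (c : τ → ι) :
    ∫ O : orthogonalGroup ι ℝ, ∏ t, (O.1 k (c t) + ε * O.1 p (c t)) ∂μ =
      √2 ^ Fintype.card τ * entryMoment μ (fun _ => k) c := by
  have hsq :
      (Pi.single k 1 + ε • Pi.single p 1 : ι → ℝ) ⬝ᵥ (Pi.single k 1 + ε • Pi.single p 1) = 2 := by
    simp [hkp, hkp.symm, hε, one_add_one_eq_two]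
  have hrotate := integral_prod_vecMul_eq μ (Pi.single k 1 + ε • Pi.single p 1) k c
  rw [hsq] at hrotate
  simpa [add_vecMul, smul_vecMul] using hrotate

/-- In the sum only the products with an even number of factors from each row survive, and these
come in pairs exchanged by the transposition of the two rows. -/
lemma integral_prod_add_add_integral_prod_sub_four [IsFiniteMeasure μ] (k p : ι) (c : Fin 4 → ι) :
    (∫ O : orthogonalGroup ι ℝ, ∏ t, (O.1 k (c t) + O.1 p (c t)) ∂μ)
        + ∫ O : orthogonalGroup ι ℝ, ∏ t, (O.1 k (c t) - O.1 p (c t)) ∂μ =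
      4 * (entryMoment μ ![k, k, k, k] c + entryMoment μ ![k, k, p, p] c
        + entryMoment μ ![k, p, k, p] c + entryMoment μ ![k, p, p, k] c) := by
  let evenRows : Fin 4 → Fin 4 → ι := ![![k, k, k, k], ![k, k, p, p], ![k, p, k, p], ![k, p, p, k]]
  have hexpand (O : orthogonalGroup ι ℝ) :
      ∏ t, (O.1 k (c t) + O.1 p (c t)) + ∏ t, (O.1 k (c t) - O.1 p (c t)) =
        2 * ∑ s, (∏ t, O.1 (evenRows s t) (c t)
          + ∏ t, O.1 (Equiv.swap k p (evenRows s t)) (c t)) := by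
    simp only [Fin.prod_univ_four, Fin.sum_univ_four, evenRows, cons_val, Equiv.swap_apply_left,
      Equiv.swap_apply_right]
    ring
  have hpair (s : Fin 4) :
      ∫ O : orthogonalGroup ι ℝ, (∏ t, O.1 (evenRows s t) (c t)
        + ∏ t, O.1 (Equiv.swap k p (evenRows s t)) (c t)) ∂μ =
          2 * entryMoment μ (evenRows s) c := by
    rw [integral_add (integrable_of_continuous_of_compactSpace (by fun_prop))
      (integrable_of_continuous_of_compactSpace (by fun_prop)), two_mul]
    exact congr_arg _ (entryMoment_perm_comp μ (Equiv.swap k p) (evenRows s) c)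
  rw [← integral_add (integrable_of_continuous_of_compactSpace (by fun_prop))
    (integrable_of_continuous_of_compactSpace (by fun_prop))]
  simp_rw [hexpand, integral_const_mul]
  rw [integral_finsetSum _ fun s _ => integrable_of_continuous_of_compactSpace (by fun_prop)]
  simp only [hpair, Fin.sum_univ_four, evenRows, cons_val]
  ring

lemma entryMoment_four_const [IsFiniteMeasure μ] {k p : ι} (hkp : k ≠ p) (c : Fin 4 → ι) :
    entryMoment μ ![k, k, k, k] c =
      entryMoment μ ![k, k, p, p] c + entryMoment μ ![k, p, k, p] c
        + entryMoment μ ![k, p, p, k] c := by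
  have hrotate (ε : ℝ) (hε : ε * ε = 1) :
      ∫ O : orthogonalGroup ι ℝ, ∏ t, (O.1 k (c t) + ε * O.1 p (c t)) ∂μ =
        4 * entryMoment μ ![k, k, k, k] c := by
    have hsqrt : √(2 : ℝ) ^ 4 = 4 := by norm_num [pow_mul √(2 : ℝ) 2 2]
    have hconst : (fun _ : Fin 4 => k) = ![k, k, k, k] := by ext t; fin_cases t <;> rfl
    rw [integral_prod_apply_add_mul_apply_eq μ hkp hε, Fintype.card_fin, hsqrt, hconst]
  have hadd := hrotate 1 (by norm_num)
  have hsub := hrotate (-1) (by norm_num)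
  simp only [one_mul, neg_mul, ← sub_eq_add_neg] at hadd hsub
  linarith [integral_prod_add_add_integral_prod_sub_four μ k p c]

lemma entryMoment_four_eq_zero {k l p q : ι} (hklpq : ¬(k = l ∧ p = q)) (hkplq : ¬(k = p ∧ l = q))
    (hkqlp : ¬(k = q ∧ l = p)) (c : Fin 4 → ι) : entryMoment μ ![k, l, p, q] c = 0 := by
  have hodd (x : ι) (hx : Odd (Finset.card {t | ![k, l, p, q] t = x})) :
      entryMoment μ ![k, l, p, q] c = 0 := entryMoment_eq_zero_of_odd μ hx c
  simp only [Fin.card_filter_univ_succ] at hodd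
  rcases eq_or_ne k l with rfl | hkl
  · have hpq : p ≠ q := by simpa using hklpq
    rcases eq_or_ne k p with rfl | hkp
    · exact hodd q (by simp [hpq])
    · exact hodd p (by simp [hkp, hpq.symm])
  rcases eq_or_ne k p with rfl | hkp
  · have hlq : l ≠ q := by simpa using hkplq
    exact hodd l (by simp [hkl, hlq.symm])
  rcases eq_or_ne k q with rfl | hkq
  · have hlp : l ≠ p := by simpa using hkqlp
    exact hodd l (by simp [hkl, hlp.symm])
  exact hodd k (by simp [hkl.symm, hkp.symm, hkq.symm])

lemma exists_entryMoment_four_eq_pairings [IsFiniteMeasure μ] [Nontrivial ι] (c : Fin 4 → ι) :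
    ∃ α β γ : ℝ, ∀ k l p q, entryMoment μ ![k, l, p, q] c =
      α * (δ k l * δ p q) + β * (δ k p * δ l q) + γ * (δ k q * δ l p) := by
  obtain ⟨a, b, hab⟩ := exists_pair_ne ι
  refine ⟨entryMoment μ ![a, a, b, b] c, entryMoment μ ![a, b, a, b] c,
    entryMoment μ ![a, b, b, a] c, fun k l p q => ?_⟩
  have hpattern {x y : ι} (hxy : x ≠ y) (e : Fin 4 → Fin 2) :
      entryMoment μ (fun t => ![x, y] (e t)) c = entryMoment μ (fun t => ![a, b] (e t)) c :=
    entryMoment_comp_eq_of_injective μ (injective_pair_iff_ne.mpr hxy)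
      (injective_pair_iff_ne.mpr hab) e c
  have hα {x y : ι} (hxy : x ≠ y) :
      entryMoment μ ![x, x, y, y] c = entryMoment μ ![a, a, b, b] c := by
    simpa [entryMoment, Fin.prod_univ_four] using hpattern hxy ![0, 0, 1, 1]
  have hβ {x y : ι} (hxy : x ≠ y) :
      entryMoment μ ![x, y, x, y] c = entryMoment μ ![a, b, a, b] c := by
    simpa [entryMoment, Fin.prod_univ_four] using hpattern hxy ![0, 1, 0, 1]
  have hγ {x y : ι} (hxy : x ≠ y) :
      entryMoment μ ![x, y, y, x] c = entryMoment μ ![a, b, b, a] c := by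
    simpa [entryMoment, Fin.prod_univ_four] using hpattern hxy ![0, 1, 1, 0]
  by_cases hklpq : k = l ∧ p = q
  · obtain ⟨rfl, rfl⟩ := hklpq
    rcases eq_or_ne k p with rfl | hkp
    · obtain ⟨x, hx⟩ := exists_ne k
      simp [entryMoment_four_const μ hx.symm, hα hx.symm, hβ hx.symm, hγ hx.symm]
    · simp [hkp, hα hkp]
  by_cases hkplq : k = p ∧ l = q
  · obtain ⟨rfl, rfl⟩ := hkplq
    have hkl : k ≠ l := by simpa using hklpq
    simp [hkl, hkl.symm, hβ]
  by_cases hkqlp : k = q ∧ l = p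
  · obtain ⟨rfl, rfl⟩ := hkqlp
    have hkl : k ≠ l := fun h => hklpq ⟨h, h.symm⟩
    simp [hkl, hkl.symm, hγ]
  rw [entryMoment_four_eq_zero μ hklpq hkplq hkqlp]
  simp [one_apply, ← ite_and, and_comm, *]

lemma eq_of_weingarten_system {K : Type*} [Field K] {D α β γ X Y Z : K} (hD : D ≠ 0)
    (hD_sub : D - 1 ≠ 0) (hD_add : D + 2 ≠ 0) (hX : D * (D * α + β + γ) = X)
    (hY : D * (α + D * β + γ) = Y) (hZ : D * (α + β + D * γ) = Z) :
    α = (D + 1) / (D * (D - 1) * (D + 2)) * X - 1 / (D * (D - 1) * (D + 2)) * (Y + Z) ∧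
    β = (D + 1) / (D * (D - 1) * (D + 2)) * Y - 1 / (D * (D - 1) * (D + 2)) * (X + Z) ∧
    γ = (D + 1) / (D * (D - 1) * (D + 2)) * Z - 1 / (D * (D - 1) * (D + 2)) * (X + Y) := by
  subst hX hY hZ
  refine ⟨?_, ?_, ?_⟩ <;>
  · field_simp
    ring

theorem orthogonal_haar_fourth_moment_general [Nontrivial ι] [IsProbabilityMeasure μ]
    (k l p q i j m n : ι) :
    ∫ O : orthogonalGroup ι ℝ, O.1 k i * O.1 l j * O.1 p m * O.1 q n ∂μ =
      ((Fintype.card ι : ℝ) + 1) / (Fintype.card ι * (Fintype.card ι - 1) * (Fintype.card ι + 2)) *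
          (δ k l * δ p q * (δ i j * δ m n) + δ k p * δ l q * (δ i m * δ j n)
            + δ k q * δ l p * (δ i n * δ j m)) -
        1 / (Fintype.card ι * (Fintype.card ι - 1) * (Fintype.card ι + 2)) *
          (δ k l * δ p q * (δ i m * δ j n + δ i n * δ j m)
            + δ k p * δ l q * (δ i j * δ m n + δ i n * δ j m)
            + δ k q * δ l p * (δ i j * δ m n + δ i m * δ j n)) := by
  obtain ⟨α, β, γ, hpairings⟩ := exists_entryMoment_four_eq_pairings μ ![i, j, m, n]
  have hcard : (Fintype.card ι : ℝ) ≠ 0 := Nat.cast_ne_zero.mpr Fintype.card_ne_zero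
  have hcard_sub : (Fintype.card ι : ℝ) - 1 ≠ 0 :=
    sub_ne_zero.mpr (Nat.cast_ne_one.mpr Fintype.one_lt_card.ne')
  have hcard_add : (Fintype.card ι : ℝ) + 2 ≠ 0 := by positivity
  have hcontract_ij : Fintype.card ι * (Fintype.card ι * α + β + γ) = δ i j * δ m n := by
    rw [← card_mul_sum_entryMoment_xxpp μ k i j m n]
    simp [hpairings, one_apply, Finset.sum_add_distrib]
  have hcontract_im : Fintype.card ι * (α + Fintype.card ι * β + γ) = δ i m * δ j n := by
    rw [← card_mul_sum_entryMoment_xpxp μ k i j m n]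
    simp [hpairings, one_apply, Finset.sum_add_distrib]
  have hcontract_in : Fintype.card ι * (α + β + Fintype.card ι * γ) = δ i n * δ j m := by
    rw [← card_mul_sum_entryMoment_xppx μ k i j m n]
    simp [hpairings, one_apply, Finset.sum_add_distrib]
  obtain ⟨hα, hβ, hγ⟩ := eq_of_weingarten_system hcard hcard_sub hcard_add hcontract_ij hcontract_im
    hcontract_in
  have hintegral := hpairings k l p q
  simp only [entryMoment, Fin.prod_univ_four, cons_val] at hintegral
  rw [hintegral, hα, hβ, hγ]
  ring

/-- **Fourth moment of Haar-random orthogonal matrix entries.**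
For `d ≥ 2` and indices `i, k, m, p`,
`∫ O_{ki} O_{km} O_{pi} O_{pm} dμ(O) = c₁(δ_{im} + δ_{kp} + δ_{im}δ_{kp})
  − c₂(1 + δ_{im} + δ_{kp} + 3δ_{im}δ_{kp})`,
where `c₁ = (d+1)/(d(d−1)(d+2))` and `c₂ = 1/(d(d−1)(d+2))`. -/
theorem orthogonal_haar_fourth_moment
    (d : ℕ) (hd : 2 ≤ d) (i k m p : Fin d)
    (μ : Measure (Matrix.orthogonalGroup (Fin d) ℝ))
    [μ.IsHaarMeasure] [IsProbabilityMeasure μ] :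
    ∫ O : Matrix.orthogonalGroup (Fin d) ℝ,
        (O : Matrix (Fin d) (Fin d) ℝ) k i * (O : Matrix (Fin d) (Fin d) ℝ) k m *
          (O : Matrix (Fin d) (Fin d) ℝ) p i * (O : Matrix (Fin d) (Fin d) ℝ) p m ∂μ
      = ((d : ℝ) + 1) / (d * (d - 1) * (d + 2)) *
            (kdelta i m + kdelta k p + kdelta i m * kdelta k p) -
          1 / (d * (d - 1) * (d + 2)) *
            (1 + kdelta i m + kdelta k p + 3 * kdelta i m * kdelta k p) := by
  have : BorelSpace (orthogonalGroup (Fin d) ℝ) := ⟨rfl⟩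
  have : Nontrivial (Fin d) := Fin.nontrivial_iff_two_le.mpr hd
  rw [orthogonal_haar_fourth_moment_general μ k k p p i m i m, Fintype.card_fin]
  rcases eq_or_ne i m with rfl | him <;> rcases eq_or_ne k p with rfl | hkp <;>
    simp only [kdelta, one_apply_eq, one_apply_ne, if_pos, if_neg, ne_eq, not_false_eq_true, *] <;>
    ring
end
end

section
/- Let d ≥ 2 and let ρ be a real density matrix with purity P = Tr(ρ²). Then the Haar average over the unitary group of the purity-constrained imaginarity-generating power equals ∫_{U(d)} ∫_{O(d)} I(U (O ρ Oᵀ) U†) dμ_O(O) dμ_U(U) = (dP − 1)/(2(d+1)). -/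
open MeasureTheory Matrix

noncomputable section

/-- The imaginarity of a complex matrix with respect to the computational basis:
`I(ρ) = (1/4)·‖ρ − ρᵀ‖₂²` where `‖A‖₂² = Tr(A†A)` is the squared Hilbert–Schmidt norm. -/
def Imag {d : ℕ} (ρ : Matrix (Fin d) (Fin d) ℂ) : ℝ :=
  (1 / 4) * (((ρ - ρᵀ)ᴴ * (ρ - ρᵀ)).trace).re

instance (d : ℕ) : MeasurableSpace (Matrix.unitaryGroup (Fin d) ℂ) := borel _

/-!
For a Hermitian matrix `X`, `I(X) = (Tr(X²) − Tr(XXᵀ)) / 2`. If `A` has eigenvalues `λₐ` and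
`X = UAU†`, then `Tr(X²) = ∑ λₐ²`, and right invariance lets us replace `U` by `UV†`, where `V`
diagonalizes `A`, after which `Tr(XXᵀ) = ∑ λₐ λ_b |W_{ab}|²` with `W = UᵀU`.

The number `E |vᵀWv|²` is the same for all unit vectors `v`, because `U(d)` acts transitively on
them. Averaging over `v = (eₐ + z e_b) / √2` with `z` a fourth root of unity kills the cross terms
and gives `E |Wₐₐ|² = 2 E |W_{ab}|²` for `a ≠ b`. As the rows of the unitary matrix `W` have norm
one, `E |W_{ab}|² = (1 + δ_{ab}) / (d + 1)`.

The rotation `ρ ↦ OρOᵀ` is absorbed by the right invariance of the measure on `U(d)`.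
-/

theorem integral_integral_mul_right_eq_self {G H E : Type*}
    [TopologicalSpace G] [CompactSpace G] [Group G] [ContinuousMul G]
    [MeasurableSpace G] [BorelSpace G] [TopologicalSpace H] [CompactSpace H]
    [MeasurableSpace H] [OpensMeasurableSpace H] [NormedAddCommGroup E] [NormedSpace ℝ E]
    [CompleteSpace E] (μ : Measure G) [IsFiniteMeasure μ] [μ.IsMulRightInvariant]
    (ν : Measure H) [IsProbabilityMeasure ν]
    {f : G → E} (hf : Continuous f) {φ : H → G} (hφ : Continuous φ) :
    ∫ g, ∫ h, f (g * φ h) ∂ν ∂μ = ∫ g, f g ∂μ := by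
  rw [integral_integral_swap_of_hasCompactSupport (by fun_prop) (.of_compactSpace _)]
  simp only [integral_mul_right_eq_self, integral_const, probReal_univ, one_smul]

instance isMulRightInvariant_of_isHaarMeasure {G : Type*} [TopologicalSpace G] [CompactSpace G]
    [Group G] [IsTopologicalGroup G] [MeasurableSpace G] [BorelSpace G]
    (μ : Measure G) [μ.IsHaarMeasure] [IsProbabilityMeasure μ] : μ.IsMulRightInvariant where
  map_mul_right_eq_self g :=
    have : IsProbabilityMeasure (μ.map (· * g)) :=
      Measure.isProbabilityMeasure_map (by fun_prop)
    Measure.isHaarMeasure_eq_of_isProbabilityMeasure _ _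

theorem sum_fourth_roots_norm_sq (x y w : ℂ) :
    ∑ k ∈ Finset.range 4, ‖x + Complex.I ^ k * y + (Complex.I ^ k) ^ 2 * w‖ ^ 2 =
      4 * (‖x‖ ^ 2 + ‖y‖ ^ 2 + ‖w‖ ^ 2) := by
  simp only [Finset.sum_range_succ, Finset.sum_range_zero, ← Complex.normSq_eq_norm_sq]
  simp only [Complex.normSq_apply, pow_succ, pow_zero, one_mul, Complex.I_mul_I, neg_mul,
    mul_neg, neg_neg, mul_one, Complex.add_re, Complex.add_im, Complex.mul_re, Complex.mul_im,
    Complex.neg_re, Complex.neg_im, Complex.I_re, Complex.I_im, zero_mul, zero_sub, zero_add]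
  ring

section OfReal

variable {m n : Type*}

theorem conjTranspose_map_ofReal (A : Matrix m n ℝ) :
    (A.map Complex.ofReal)ᴴ = (A.map Complex.ofReal)ᵀ := by
  ext i j
  exact Complex.conj_ofReal _

theorem isHermitian_map_ofReal {A : Matrix n n ℝ} (hA : A.IsSymm) :
    (A.map Complex.ofReal).IsHermitian :=
  (conjTranspose_map_ofReal A).trans (hA.map _).eq

variable [Fintype n]

theorem map_ofReal_mul_map_ofReal {k : Type*} (A : Matrix m n ℝ) (B : Matrix n k ℝ) :
    A.map Complex.ofReal * B.map Complex.ofReal = (A * B).map Complex.ofReal :=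
  (Matrix.map_mul (f := Complex.ofRealHom)).symm

theorem re_trace_map_ofReal (A : Matrix n n ℝ) :
    (A.map Complex.ofReal).trace.re = A.trace :=
  congrArg Complex.re (AddMonoidHom.map_trace Complex.ofRealHom A).symm

end OfReal

section UnitaryGroup

variable {n : Type*} [Fintype n] [DecidableEq n]

section StarRing

variable {α : Type*} [CommRing α] [StarRing α]

theorem trace_unitary_conj (U : unitaryGroup n α) (A : Matrix n n α) :
    (U.val * A * U.valᴴ).trace = A.trace := by
  rw [trace_mul_cycle, ← star_eq_conjTranspose, UnitaryGroup.star_mul_self, Matrix.one_mul]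

theorem unitary_conj_mul_unitary_conj (U : unitaryGroup n α) (A B : Matrix n n α) :
    U.val * A * U.valᴴ * (U.val * B * U.valᴴ) = U.val * (A * B) * U.valᴴ := by
  have hU : U.valᴴ * U.val = 1 := UnitaryGroup.star_mul_self U
  simp only [Matrix.mul_assoc, ← Matrix.mul_assoc U.valᴴ, hU, Matrix.one_mul]

end StarRing

variable {𝕜 : Type*} [RCLike 𝕜]

instance : CompactSpace (unitaryGroup n 𝕜) := by
  have hbox : IsCompact (Set.univ.pi fun _ : n => Set.univ.pi fun _ : n =>
      Metric.closedBall (0 : 𝕜) 1) :=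
    isCompact_univ_pi fun _ => isCompact_univ_pi fun _ => isCompact_closedBall _ _
  refine isCompact_iff_compactSpace.mp
    (hbox.of_isClosed_subset (isClosed_unitary (R := Matrix n n 𝕜)) ?_)
  intro U hU i _ j _
  simpa only [mem_closedBall_zero_iff] using entry_norm_bound_of_unitary hU i j

theorem sum_norm_sq_row_of_mem_unitaryGroup {U : Matrix n n 𝕜} (hU : U ∈ unitaryGroup n 𝕜)
    (a : n) : ∑ b, ‖U a b‖ ^ 2 = 1 := by
  have hdiag : (U * star U) a a = 1 := by
    rw [mem_unitaryGroup_iff.mp hU, one_apply_eq]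
  simp only [mul_apply, star_apply, RCLike.star_def, RCLike.mul_conj] at hdiag
  exact_mod_cast hdiag

theorem exists_unitaryGroup_col_eq {v : EuclideanSpace 𝕜 n} (hv : ‖v‖ = 1) (a : n) :
    ∃ V : unitaryGroup n 𝕜, (V : Matrix n n 𝕜).col a = v := by
  have hon : Orthonormal 𝕜 (({a} : Set n).domRestrict fun _ => v) :=
    ⟨fun _ => hv, fun i j hij => (hij (Subsingleton.elim i j)).elim⟩
  obtain ⟨b, hb⟩ := hon.exists_orthonormalBasis_extension_of_card_eq finrank_euclideanSpace
  refine ⟨⟨_, (EuclideanSpace.basisFun n 𝕜).toMatrix_orthonormalBasis_mem_unitary b⟩, ?_⟩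
  ext i
  simp [Module.Basis.toMatrix_apply, hb a rfl]

theorem map_ofReal_mem_unitaryGroup {O : Matrix n n ℝ} (hO : O ∈ orthogonalGroup n ℝ) :
    O.map Complex.ofReal ∈ unitaryGroup n ℂ := by
  have hO' : O * Oᵀ = 1 := (mem_orthogonalGroup_iff n ℝ).mp hO
  rw [mem_unitaryGroup_iff, star_eq_conjTranspose, conjTranspose_map_ofReal, ← transpose_map,
    map_ofReal_mul_map_ofReal, hO', Matrix.map_one _ Complex.ofReal_zero Complex.ofReal_one]

end UnitaryGroup

section ConjOverlap

variable {n : Type*} [Fintype n]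

/-- The squared overlap `|⟨ū_a, u_b⟩|²` of the complex conjugate of the `a`-th column of `U` with
the `b`-th column. For a Haar distributed unitary `U`, these are the squared moduli of the entries
of the symmetric unitary matrix `UᵀU` of the circular orthogonal ensemble. -/
def conjOverlap (U : Matrix n n ℂ) (a b : n) : ℝ := ‖(Uᵀ * U) a b‖ ^ 2

theorem conjOverlap_comm (U : Matrix n n ℂ) (a b : n) :
    conjOverlap U a b = conjOverlap U b a := by
  rw [conjOverlap, (isSymm_transpose_mul_self U).apply, conjOverlap]

theorem continuous_conjOverlap (a b : n) :
    Continuous fun U : Matrix n n ℂ => conjOverlap U a b := by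
  unfold conjOverlap
  fun_prop

theorem conjOverlap_mul_self (U V : Matrix n n ℂ) (a : n) :
    conjOverlap (U * V) a a = ‖V.col a ⬝ᵥ (Uᵀ * U) *ᵥ V.col a‖ ^ 2 := by
  rw [conjOverlap, transpose_mul, Matrix.mul_assoc, ← Matrix.mul_assoc Uᵀ]
  rfl

theorem trace_conj_diagonal_mul_transpose [DecidableEq n] (U : Matrix n n ℂ) (l : n → ℂ) :
    (U * diagonal l * Uᴴ * (U * diagonal l * Uᴴ)ᵀ).trace =
      ∑ a, ∑ b, l a * l b * conjOverlap U a b := by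
  have hXX : U * diagonal l * Uᴴ * (U * diagonal l * Uᴴ)ᵀ =
      U * (diagonal l * (Uᵀ * U)ᴴ * diagonal l * Uᵀ) := by
    simp only [transpose_mul, conjTranspose_mul, diagonal_transpose, Matrix.mul_assoc,
      conjTranspose_transpose_eq_transpose_conjTranspose]
  rw [hXX, trace_mul_comm, Matrix.mul_assoc, trace]
  refine Finset.sum_congr rfl fun a _ => ?_
  rw [diag_apply, mul_apply]
  refine Finset.sum_congr rfl fun b _ => ?_
  rw [mul_diagonal, diagonal_mul, conjTranspose_apply, conjOverlap_comm, conjOverlap,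
    Complex.ofReal_pow, ← Complex.conj_mul', starRingEnd_apply]
  ring

variable [DecidableEq n]

theorem sum_conjOverlap {U : Matrix n n ℂ} (hU : U ∈ unitaryGroup n ℂ) (a : n) :
    ∑ b, conjOverlap U a b = 1 :=
  sum_norm_sq_row_of_mem_unitaryGroup (mul_mem (transpose_mem_unitaryGroup_iff.mpr hU) hU) a

theorem exists_unitaryGroup_conjOverlap_mul_self {a b : n} (hab : a ≠ b) {z : ℂ} (hz : ‖z‖ = 1) :
    ∃ V : unitaryGroup n ℂ, ∀ U : Matrix n n ℂ, conjOverlap (U * V.val) a a =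
      ‖(Uᵀ * U) a a + z * (2 * (Uᵀ * U) a b) + z ^ 2 * (Uᵀ * U) b b‖ ^ 2 / 4 := by
  set v : EuclideanSpace ℂ n :=
    ((√2 : ℝ) : ℂ)⁻¹ • (EuclideanSpace.single a 1 + EuclideanSpace.single b z) with hv
  have hsqrt : ((√2 : ℝ) : ℂ)⁻¹ * ((√2 : ℝ) : ℂ)⁻¹ = 2⁻¹ := by
    rw [← mul_inv, ← Complex.ofReal_mul, Real.mul_self_sqrt zero_le_two, Complex.ofReal_ofNat]
  have hv_norm : ‖v‖ = 1 := by
    have hpyth := norm_add_sq_eq_norm_sq_add_norm_sq_of_inner_eq_zero (𝕜 := ℂ)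
      (EuclideanSpace.single a 1) (EuclideanSpace.single b z)
      (by simp [EuclideanSpace.inner_single_left, hab])
    have hnorm : ‖EuclideanSpace.single a 1 + EuclideanSpace.single b z‖ = √2 := by
      rw [← Real.sqrt_mul_self (norm_nonneg _), hpyth, PiLp.norm_single, PiLp.norm_single, hz,
        norm_one]
      norm_num
    rw [hv, norm_smul, hnorm, norm_inv, Complex.norm_real, Real.norm_of_nonneg (Real.sqrt_nonneg 2),
      inv_mul_cancel₀ (by positivity)]
  obtain ⟨V, hV⟩ := exists_unitaryGroup_col_eq hv_norm a
  refine ⟨V, fun U => ?_⟩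
  have hsymm : (Uᵀ * U) b a = (Uᵀ * U) a b := (isSymm_transpose_mul_self U).apply a b
  have hquad : V.val.col a ⬝ᵥ (Uᵀ * U) *ᵥ V.val.col a =
      ((Uᵀ * U) a a + z * (2 * (Uᵀ * U) a b) + z ^ 2 * (Uᵀ * U) b b) / 2 := by
    rw [hV, hv]
    simp only [smul_add, WithLp.ofLp_add, WithLp.ofLp_smul, PiLp.ofLp_single, mulVec_add,
      mulVec_smul, mulVec_single, MulOpposite.op_one, one_smul, op_smul_eq_smul, dotProduct_add,
      dotProduct_smul, add_dotProduct, smul_dotProduct, single_dotProduct, col_apply, one_mul,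
      smul_eq_mul, hsymm]
    linear_combination ((Uᵀ * U) a a + z * (2 * (Uᵀ * U) a b) + z ^ 2 * (Uᵀ * U) b b) * hsqrt
  rw [conjOverlap_mul_self, hquad, norm_div, Complex.norm_ofNat]
  ring

theorem exists_sum_conjOverlap_mul_self {a b : n} (hab : a ≠ b) :
    ∃ V : ℕ → unitaryGroup n ℂ, ∀ U : Matrix n n ℂ,
      ∑ k ∈ Finset.range 4, conjOverlap (U * (V k).val) a a =
        conjOverlap U a a + 4 * conjOverlap U a b + conjOverlap U b b := by
  choose V hV using fun k : ℕ => exists_unitaryGroup_conjOverlap_mul_self hab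
    (z := Complex.I ^ k) (by simp only [norm_pow, Complex.norm_I, one_pow])
  refine ⟨V, fun U => ?_⟩
  simp only [hV]
  rw [← Finset.sum_div, sum_fourth_roots_norm_sq, norm_mul, Complex.norm_ofNat]
  simp only [conjOverlap]
  ring

end ConjOverlap

section HaarMoments

variable {n : Type*} [Fintype n] [DecidableEq n]
  [MeasurableSpace (unitaryGroup n ℂ)] [BorelSpace (unitaryGroup n ℂ)]
  (μ : Measure (unitaryGroup n ℂ))

theorem integrable_conjOverlap [IsFiniteMeasure μ] (a b : n) :
    Integrable (fun U : unitaryGroup n ℂ => conjOverlap U.val a b) μ :=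
  ((continuous_conjOverlap a b).comp continuous_subtype_val).integrable_of_hasCompactSupport
    (.of_compactSpace _)

variable [IsProbabilityMeasure μ] [μ.IsMulRightInvariant]

theorem four_mul_integral_conjOverlap_self {a b : n} (hab : a ≠ b) :
    4 * ∫ U : unitaryGroup n ℂ, conjOverlap U.val a a ∂μ =
      ∫ U : unitaryGroup n ℂ, conjOverlap U.val a a ∂μ +
        4 * ∫ U : unitaryGroup n ℂ, conjOverlap U.val a b ∂μ +
        ∫ U : unitaryGroup n ℂ, conjOverlap U.val b b ∂μ := by
  have hint := integrable_conjOverlap μ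
  obtain ⟨V, hV⟩ := exists_sum_conjOverlap_mul_self hab
  calc 4 * ∫ U : unitaryGroup n ℂ, conjOverlap U.val a a ∂μ
      = ∑ k ∈ Finset.range 4, ∫ U : unitaryGroup n ℂ, conjOverlap (U * V k).val a a ∂μ := by
        simp only [integral_mul_right_eq_self (fun U : unitaryGroup n ℂ => conjOverlap U.val a a),
          Finset.sum_const, Finset.card_range, nsmul_eq_mul, Nat.cast_ofNat]
    _ = ∫ U : unitaryGroup n ℂ, ∑ k ∈ Finset.range 4, conjOverlap (U * V k).val a a ∂μ :=
        (integral_finsetSum _ fun k _ => (hint a a).comp_mul_right (V k)).symm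
    _ = ∫ U : unitaryGroup n ℂ,
          (conjOverlap U.val a a + 4 * conjOverlap U.val a b + conjOverlap U.val b b) ∂μ := by
        simp only [UnitaryGroup.mul_val, hV]
    _ = _ := by
        rw [integral_add (by exact (hint a a).add ((hint a b).const_mul 4)) (hint b b),
          integral_add (hint a a) ((hint a b).const_mul 4), integral_const_mul]

theorem integral_conjOverlap_self_eq_two_mul {a b : n} (hab : a ≠ b) :
    ∫ U : unitaryGroup n ℂ, conjOverlap U.val a a ∂μ =
      2 * ∫ U : unitaryGroup n ℂ, conjOverlap U.val a b ∂μ := by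
  have h_ab := four_mul_integral_conjOverlap_self μ hab
  have h_ba := four_mul_integral_conjOverlap_self μ hab.symm
  simp only [conjOverlap_comm _ b a] at h_ba
  linarith

theorem integral_conjOverlap (a b : n) :
    ∫ U : unitaryGroup n ℂ, conjOverlap U.val a b ∂μ =
      (1 + if a = b then 1 else 0) / (Fintype.card n + 1) := by
  set p := ∫ U : unitaryGroup n ℂ, conjOverlap U.val a a ∂μ with hp
  have hrow : ∀ c, ∫ U : unitaryGroup n ℂ, conjOverlap U.val a c ∂μ =
      p / 2 * (1 + if a = c then 1 else 0) := by
    intro c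
    split_ifs with hac
    · rw [← hac, ← hp]; ring
    · rw [hp, integral_conjOverlap_self_eq_two_mul μ hac]; ring
  have hsum : p / 2 * (Fintype.card n + 1) = 1 := by
    calc p / 2 * (Fintype.card n + 1)
        = ∑ c, p / 2 * (1 + if a = c then 1 else 0) := by
          simp [← Finset.mul_sum, Finset.sum_add_distrib]
      _ = ∫ U : unitaryGroup n ℂ, ∑ c, conjOverlap U.val a c ∂μ := by
          rw [integral_finsetSum _ fun c _ => integrable_conjOverlap μ a c]
          simp only [hrow]
      _ = 1 := by simp [sum_conjOverlap (SetLike.coe_mem _)]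
  rw [hrow, eq_div_of_mul_eq (by positivity) hsum]
  ring

end HaarMoments

section Hermitian

variable {n : Type*} [Fintype n] [DecidableEq n] {A : Matrix n n ℂ}

theorem eq_unitary_conj_diagonal_eigenvalues (hA : A.IsHermitian) :
    A = hA.eigenvectorUnitary.val * diagonal (fun a => (hA.eigenvalues a : ℂ)) *
      hA.eigenvectorUnitary.valᴴ := by
  conv_lhs => rw [hA.spectral_theorem, Unitary.conjStarAlgAut_apply]
  rfl

theorem trace_mul_self_eq_sum_sq_eigenvalues (hA : A.IsHermitian) :
    (A * A).trace = ∑ a, (hA.eigenvalues a : ℂ) ^ 2 := by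
  conv_lhs => rw [eq_unitary_conj_diagonal_eigenvalues hA]
  rw [unitary_conj_mul_unitary_conj, trace_unitary_conj, diagonal_mul_diagonal, trace_diagonal]
  simp only [sq]

theorem re_trace_conj_mul_transpose (hA : A.IsHermitian) (U : Matrix n n ℂ) :
    (U * A * Uᴴ * (U * A * Uᴴ)ᵀ).trace.re = ∑ a, ∑ b, hA.eigenvalues a * hA.eigenvalues b *
      conjOverlap (U * hA.eigenvectorUnitary.val) a b := by
  have hconj : U * A * Uᴴ = U * hA.eigenvectorUnitary.val *
      diagonal (fun a => (hA.eigenvalues a : ℂ)) * (U * hA.eigenvectorUnitary.val)ᴴ := by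
    conv_lhs => rw [eq_unitary_conj_diagonal_eigenvalues hA]
    simp only [conjTranspose_mul, Matrix.mul_assoc]
  rw [hconj, trace_conj_diagonal_mul_transpose]
  exact_mod_cast Complex.ofReal_re _

theorem integral_re_trace_conj_mul_transpose [MeasurableSpace (unitaryGroup n ℂ)]
    [BorelSpace (unitaryGroup n ℂ)] (hA : A.IsHermitian) (μ : Measure (unitaryGroup n ℂ))
    [IsProbabilityMeasure μ] [μ.IsMulRightInvariant] :
    ∫ U : unitaryGroup n ℂ, (U.val * A * U.valᴴ * (U.val * A * U.valᴴ)ᵀ).trace.re ∂μ =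
      (A.trace.re ^ 2 + (A * A).trace.re) / (Fintype.card n + 1) := by
  set l := hA.eigenvalues with hl
  have hint (a b : n) :
      Integrable (fun U : unitaryGroup n ℂ => l a * l b * conjOverlap U.val a b) μ :=
    (integrable_conjOverlap μ a b).const_mul _
  have htrace : A.trace.re = ∑ a, l a := by
    rw [hA.trace_eq_sum_eigenvalues, Complex.re_sum]
    rfl
  have htrace_sq : (A * A).trace.re = ∑ a, l a ^ 2 := by
    rw [trace_mul_self_eq_sum_sq_eigenvalues hA]
    exact_mod_cast Complex.ofReal_re _
  calc ∫ U : unitaryGroup n ℂ, (U.val * A * U.valᴴ * (U.val * A * U.valᴴ)ᵀ).trace.re ∂μ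
      = ∫ U : unitaryGroup n ℂ, ∑ a, ∑ b, l a * l b *
          conjOverlap (U * hA.eigenvectorUnitary).val a b ∂μ := by
        simp only [re_trace_conj_mul_transpose hA, UnitaryGroup.mul_val, hl]
    _ = ∫ U : unitaryGroup n ℂ, ∑ a, ∑ b, l a * l b * conjOverlap U.val a b ∂μ :=
        integral_mul_right_eq_self (μ := μ) (fun U : unitaryGroup n ℂ =>
          ∑ a, ∑ b, l a * l b * conjOverlap U.val a b) hA.eigenvectorUnitary
    _ = ∑ a, ∑ b, l a * l b * ((1 + if a = b then 1 else 0) / (Fintype.card n + 1)) := by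
        rw [integral_finsetSum _ fun a _ => integrable_finsetSum _ fun b _ => hint a b]
        simp only [integral_finsetSum _ fun b _ => hint _ b, integral_const_mul,
          integral_conjOverlap]
    _ = ((∑ a, l a) ^ 2 + ∑ a, l a ^ 2) / (Fintype.card n + 1) := by
        simp only [← mul_div_assoc, ← Finset.sum_div, mul_add, mul_one, mul_ite, mul_zero,
          Finset.sum_add_distrib, Finset.sum_ite_eq, Finset.mem_univ, if_true,
          ← Finset.sum_mul_sum, ← sq]
    _ = (A.trace.re ^ 2 + (A * A).trace.re) / (Fintype.card n + 1) := by
        rw [htrace, htrace_sq]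

end Hermitian

section Imaginarity

variable {d : ℕ}

instance : BorelSpace (unitaryGroup (Fin d) ℂ) := ⟨rfl⟩

instance : BorelSpace (orthogonalGroup (Fin d) ℝ) := ⟨rfl⟩

theorem Imag_eq_of_isHermitian {X : Matrix (Fin d) (Fin d) ℂ} (hX : X.IsHermitian) :
    Imag X = ((X * X).trace.re - (X * Xᵀ).trace.re) / 2 := by
  have htrace : ((X - Xᵀ)ᴴ * (X - Xᵀ)).trace = 2 * ((X * X).trace - (X * Xᵀ).trace) := by
    rw [conjTranspose_sub, hX.eq, hX.transpose.eq, Matrix.sub_mul, Matrix.mul_sub, Matrix.mul_sub,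
      trace_sub, trace_sub, trace_sub, ← transpose_mul, trace_transpose, trace_mul_comm Xᵀ X]
    ring
  rw [Imag, htrace, ← Complex.sub_re, ← Complex.ofReal_ofNat, Complex.re_ofReal_mul]
  ring

theorem continuous_Imag : Continuous (Imag : Matrix (Fin d) (Fin d) ℂ → ℝ) := by
  unfold Imag
  fun_prop

theorem Imag_unitary_conj {A : Matrix (Fin d) (Fin d) ℂ} (hA : A.IsHermitian)
    (U : unitaryGroup (Fin d) ℂ) :
    Imag (U.val * A * U.valᴴ) =
      ((A * A).trace.re - (U.val * A * U.valᴴ * (U.val * A * U.valᴴ)ᵀ).trace.re) / 2 := by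
  rw [Imag_eq_of_isHermitian (isHermitian_mul_mul_conjTranspose _ hA),
    unitary_conj_mul_unitary_conj, trace_unitary_conj]

theorem integral_Imag_unitary_conj {A : Matrix (Fin d) (Fin d) ℂ} (hA : A.IsHermitian)
    (μ : Measure (unitaryGroup (Fin d) ℂ)) [IsProbabilityMeasure μ] [μ.IsMulRightInvariant] :
    ∫ U : unitaryGroup (Fin d) ℂ, Imag (U.val * A * U.valᴴ) ∂μ =
      (d * (A * A).trace.re - A.trace.re ^ 2) / (2 * (d + 1)) := by
  have hcont : Continuous fun U : unitaryGroup (Fin d) ℂ =>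
      (U.val * A * U.valᴴ * (U.val * A * U.valᴴ)ᵀ).trace.re := by fun_prop
  simp only [Imag_unitary_conj hA]
  rw [integral_div, integral_sub (integrable_const _)
      (hcont.integrable_of_hasCompactSupport (.of_compactSpace _)),
    integral_re_trace_conj_mul_transpose hA, integral_const, probReal_univ, one_smul,
    Fintype.card_fin]
  field_simp
  ring

theorem haar_avg_purity_constrained_IGP_general
    {A : Matrix (Fin d) (Fin d) ℂ} (hA : A.IsHermitian)
    (μO : Measure (orthogonalGroup (Fin d) ℝ)) [IsProbabilityMeasure μO]
    (μU : Measure (unitaryGroup (Fin d) ℂ)) [IsProbabilityMeasure μU] [μU.IsMulRightInvariant] :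
    ∫ U : unitaryGroup (Fin d) ℂ, ∫ O : orthogonalGroup (Fin d) ℝ,
        Imag (U.val * (O.val.map Complex.ofReal * A * (O.val.map Complex.ofReal)ᵀ) * U.valᴴ)
          ∂μO ∂μU =
      (d * (A * A).trace.re - A.trace.re ^ 2) / (2 * (d + 1)) := by
  let φ (O : orthogonalGroup (Fin d) ℝ) : unitaryGroup (Fin d) ℂ :=
    ⟨_, map_ofReal_mem_unitaryGroup O.2⟩
  have hφ : Continuous φ :=
    (continuous_subtype_val.matrix_map Complex.continuous_ofReal).subtype_mk _
  have hImag : Continuous fun U : unitaryGroup (Fin d) ℂ => Imag (U.val * A * U.valᴴ) :=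
    continuous_Imag.comp (by fun_prop)
  rw [← integral_Imag_unitary_conj hA μU, ← integral_integral_mul_right_eq_self μU μO hImag hφ]
  simp only [φ, UnitaryGroup.mul_val, conjTranspose_mul, conjTranspose_map_ofReal,
    Matrix.mul_assoc]

end Imaginarity

/-- **Haar average of the purity-constrained IGP over the unitary group.**
For `d ≥ 2` and a real density matrix `ρ` of purity `P = Tr(ρ²)`,
`∫_{U(d)} ∫_{O(d)} I(U(OρOᵀ)U†) dμ_O(O) dμ_U(U) = (dP − 1)/(2(d+1))`. -/
theorem haar_avg_purity_constrained_IGP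
    (d : ℕ) (hd : 2 ≤ d)
    (ρ : Matrix (Fin d) (Fin d) ℝ) (hρsymm : ρ.IsSymm) (hρpsd : ρ.PosSemidef)
    (hρtr : ρ.trace = 1) (P : ℝ) (hP : (ρ * ρ).trace = P)
    (μO : Measure (Matrix.orthogonalGroup (Fin d) ℝ))
    [μO.IsHaarMeasure] [IsProbabilityMeasure μO]
    (μU : Measure (Matrix.unitaryGroup (Fin d) ℂ))
    [μU.IsHaarMeasure] [IsProbabilityMeasure μU] :
    ∫ U : Matrix.unitaryGroup (Fin d) ℂ,
        ∫ O : Matrix.orthogonalGroup (Fin d) ℝ,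
          Imag ((U : Matrix (Fin d) (Fin d) ℂ) *
              (((O : Matrix (Fin d) (Fin d) ℝ).map Complex.ofReal) * (ρ.map Complex.ofReal) *
                ((O : Matrix (Fin d) (Fin d) ℝ).map Complex.ofReal)ᵀ) *
              (U : Matrix (Fin d) (Fin d) ℂ)ᴴ) ∂μO ∂μU
      = ((d : ℝ) * P - 1) / (2 * (d + 1)) := by
  rw [haar_avg_purity_constrained_IGP_general (isHermitian_map_ofReal hρsymm),
    map_ofReal_mul_map_ofReal, re_trace_map_ofReal, re_trace_map_ofReal, hP, hρtr, one_pow]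
end
end

section
/- Let d ≥ 2 and let i, j, m, n ∈ {1,…,d}. Then, with respect to the Haar probability measure μ_U on the group U(d) of d×d complex unitary matrices, ∫_{U(d)} (U_{ji})² (conj(U_{nm}))² dμ_U(U) = (2/(d(d+1)))·δ_{jn}·δ_{im}. -/
/-!
Fix two columns `i`, `m`. Left invariance makes the moments
`T j j' n n' = ∫ U_{ji} U_{j'i} conj(U_{nm}) conj(U_{n'm}) dμ(U)` an invariant tensor in the row
indices. Diagonal unitaries kill every component with `{j, j'} ≠ {n, n'}` as multisets. Unitaries
with a row equal to a prescribed unit vector show that all `T j j j j` have a common value `c`, and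
that `T j k j k = c / 2` for `j ≠ k`. Orthonormality of the columns gives
`∑ j k, T j k j k = δ_{im}`, that is, `d (d + 1) c / 2 = δ_{im}`.
-/

open MeasureTheory Matrix

noncomputable section

section ColumnMoments

open scoped ComplexConjugate

variable {ι : Type*}

/-- The monomial `A_{ji} A_{j'i} conj(A_{nm}) conj(A_{n'm})` in the columns `i`, `m` of a
matrix `A`; the column indices come first, so that it reads as a tensor in the four row indices. -/
def columnMonomial (i m j j' n n' : ι) (A : Matrix ι ι ℂ) : ℂ :=
  A j i * A j' i * (conj (A n m) * conj (A n' m))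

lemma continuous_columnMonomial (i m j j' n n' : ι) :
    Continuous (columnMonomial i m j j' n n') := by
  unfold columnMonomial
  fun_prop

variable [Fintype ι]

lemma columnMonomial_mul (V A : Matrix ι ι ℂ) (i m j j' n n' : ι) :
    columnMonomial i m j j' n n' (V * A) =
      ∑ a, ∑ b, ∑ c, ∑ e,
        V j a * V j' b * (conj (V n c) * conj (V n' e)) * columnMonomial i m a b c e A := by
  simp only [columnMonomial, mul_apply, map_mul, map_sum]
  rw [Finset.sum_mul_sum, Finset.sum_mul_sum]
  simp only [Finset.sum_mul]
  simp only [Finset.mul_sum]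
  refine Fintype.sum_congr _ _ fun a ↦ Fintype.sum_congr _ _ fun b ↦
    Fintype.sum_congr _ _ fun c ↦ Fintype.sum_congr _ _ fun e ↦ ?_
  ring

variable [DecidableEq ι]

lemma norm_columnMonomial_le_one (U : unitaryGroup ι ℂ) (i m j j' n n' : ι) :
    ‖columnMonomial i m j j' n n' U‖ ≤ 1 := by
  have entry_le (a b : ι) : ‖U.1 a b‖ ≤ 1 := entry_norm_bound_of_unitary U.2 a b
  have pair_le (a b k : ι) : ‖U.1 a k * U.1 b k‖ ≤ 1 := by
    rw [norm_mul]
    exact mul_le_one₀ (entry_le a k) (norm_nonneg _) (entry_le b k)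
  rw [columnMonomial, norm_mul, ← map_mul, RCLike.norm_conj]
  exact mul_le_one₀ (pair_le j j' i) (norm_nonneg _) (pair_le n n' m)

lemma sum_columnMonomial (U : unitaryGroup ι ℂ) (i m : ι) :
    ∑ j, ∑ k, columnMonomial i m j k j k U = if i = m then 1 else 0 := by
  have columns_orthonormal : ∑ j, U.1 j i * conj (U.1 j m) = if i = m then 1 else 0 := by
    have h := congr_fun₂ (mem_unitaryGroup_iff'.mp U.2) m i
    simpa [mul_apply, one_apply, star_apply, mul_comm, eq_comm] using h
  calc ∑ j, ∑ k, columnMonomial i m j k j k U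
      = (∑ j, U.1 j i * conj (U.1 j m)) * ∑ k, U.1 k i * conj (U.1 k m) := by
        simp only [columnMonomial, Finset.sum_mul_sum, mul_mul_mul_comm]
    _ = if i = m then 1 else 0 := by simp [columns_orthonormal]

lemma diagonal_mem_unitaryGroup_iff {α : Type*} [CommRing α] [StarRing α] {z : ι → α} :
    diagonal z ∈ unitaryGroup ι α ↔ ∀ k, z k ∈ unitary α := by
  simp only [mem_unitaryGroup_iff, star_eq_conjTranspose, diagonal_conjTranspose,
    diagonal_mul_diagonal, diagonal_eq_one, funext_iff, Unitary.mem_iff_self_mul_star,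
    Pi.star_apply, Pi.one_apply]

lemma exists_unitaryGroup_row_eq {𝕜 : Type*} [RCLike 𝕜] (v : EuclideanSpace 𝕜 ι) (hv : ‖v‖ = 1)
    (j : ι) : ∃ V : unitaryGroup ι 𝕜, V.1 j = v := by
  have orthonormal_v : Orthonormal 𝕜 (({j} : Set ι).domRestrict fun _ ↦ v) :=
    ⟨fun _ ↦ hv, fun a b hab ↦ (hab (Subsingleton.elim a b)).elim⟩
  obtain ⟨b, hb⟩ := orthonormal_v.exists_orthonormalBasis_extension_of_card_eq (by simp)
  let W := (EuclideanSpace.basisFun ι 𝕜).toBasis.toMatrix b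
  have hW : W ∈ unitaryGroup ι 𝕜 :=
    (EuclideanSpace.basisFun ι 𝕜).toMatrix_orthonormalBasis_mem_unitary b
  refine ⟨⟨Wᵀ, transpose_mem_unitaryGroup_iff.mpr hW⟩, funext fun k ↦ ?_⟩
  simp [W, Module.Basis.toMatrix_apply, hb j rfl]

variable [MeasurableSpace (unitaryGroup ι ℂ)]

/-- The moment `∫ U_{ji} U_{j'i} conj(U_{nm}) conj(U_{n'm}) dμ(U)` of a measure `μ` on the unitary
group, as a tensor in the row indices. -/
def columnMoment (μ : Measure (unitaryGroup ι ℂ)) (i m j j' n n' : ι) : ℂ :=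
  ∫ U : unitaryGroup ι ℂ, columnMonomial i m j j' n n' U ∂μ

lemma columnMoment_swap_left (μ : Measure (unitaryGroup ι ℂ)) (i m j j' n n' : ι) :
    columnMoment μ i m j j' n n' = columnMoment μ i m j' j n n' := by
  simp only [columnMoment, columnMonomial, mul_comm (_ : ℂ)]

lemma columnMoment_swap_right (μ : Measure (unitaryGroup ι ℂ)) (i m j j' n n' : ι) :
    columnMoment μ i m j j' n n' = columnMoment μ i m j j' n' n := by
  simp only [columnMoment, columnMonomial, mul_comm (_ : ℂ)]

variable [BorelSpace (unitaryGroup ι ℂ)]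

lemma integrable_columnMonomial (μ : Measure (unitaryGroup ι ℂ)) [IsFiniteMeasure μ]
    (i m j j' n n' : ι) :
    Integrable (fun U : unitaryGroup ι ℂ ↦ columnMonomial i m j j' n n' U) μ :=
  .of_bound ((continuous_columnMonomial i m j j' n n').comp
    continuous_subtype_val).measurable.aestronglyMeasurable 1
    (.of_forall fun U ↦ norm_columnMonomial_le_one U i m j j' n n')

lemma sum_columnMoment (μ : Measure (unitaryGroup ι ℂ)) [IsProbabilityMeasure μ] (i m : ι) :
    ∑ j, ∑ k, columnMoment μ i m j k j k = if i = m then 1 else 0 := by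
  have integrable (j k : ι) := integrable_columnMonomial μ i m j k j k
  calc ∑ j, ∑ k, columnMoment μ i m j k j k
      = ∫ U : unitaryGroup ι ℂ, ∑ j, ∑ k, columnMonomial i m j k j k U ∂μ := by
        simp only [columnMoment]
        rw [integral_finsetSum _ fun j _ ↦ integrable_finsetSum _ fun k _ ↦ integrable j k]
        simp_rw [integral_finsetSum _ fun k _ ↦ integrable _ k]
    _ = if i = m then 1 else 0 := by simp [sum_columnMonomial]

section LeftInvariant

variable (μ : Measure (unitaryGroup ι ℂ)) [IsFiniteMeasure μ] [μ.IsMulLeftInvariant]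

lemma columnMoment_eq_sum (V : unitaryGroup ι ℂ) (i m j j' n n' : ι) :
    columnMoment μ i m j j' n n' =
      ∑ a, ∑ b, ∑ c, ∑ e,
        V.1 j a * V.1 j' b * (conj (V.1 n c) * conj (V.1 n' e)) * columnMoment μ i m a b c e := by
  have integrable (a b c e : ι) (r : ℂ) := (integrable_columnMonomial μ i m a b c e).const_mul r
  calc columnMoment μ i m j j' n n'
      = ∫ U : unitaryGroup ι ℂ, columnMonomial i m j j' n n' (V * U : unitaryGroup ι ℂ) ∂μ :=
        (integral_mul_left_eq_self _ V).symm
    _ = _ := by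
      simp only [UnitaryGroup.mul_val, columnMonomial_mul, ← Fintype.sum_prod_type']
      rw [integral_finsetSum _ fun _ _ ↦ integrable ..]
      simp only [integral_const_mul, columnMoment]

lemma columnMoment_eq_phase_mul {z : ι → ℂ} (hz : ∀ k, z k ∈ unitary ℂ)
    (i m j j' n n' : ι) :
    columnMoment μ i m j j' n n' =
      z j * z j' * (conj (z n) * conj (z n')) * columnMoment μ i m j j' n n' := by
  have h := columnMoment_eq_sum μ ⟨diagonal z, diagonal_mem_unitaryGroup_iff.mpr hz⟩ i m j j' n n'
  simpa [diagonal_apply, apply_ite conj] using h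

lemma columnMoment_eq_zero (i m : ι) {j j' n n' : ι} (h : ¬(j = n ∧ j' = n'))
    (h' : ¬(j = n' ∧ j' = n)) : columnMoment μ i m j j' n n' = 0 := by
  let phase (k l : ι) : ℂ := if l = k then Complex.I else 1
  have phase_unit (k l : ι) : phase k l ∈ unitary ℂ := by
    by_cases hl : l = k <;> simp [phase, hl, Unitary.mem_iff_self_mul_star]
  -- The phase `I` on row `k` scales the moment by `I ^ r`, where `r ∈ [-2, 2]` is the excess of the
  -- multiplicity of `k` in `{j, j'}` over that in `{n, n'}`; it is nonzero for some `k`.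
  obtain ⟨k, hk⟩ : ∃ k, phase k j * phase k j' * (conj (phase k n) * conj (phase k n')) ≠ 1 := by
    by_cases hjn : j = n
    · have hne : j' ≠ n' := fun heq ↦ h ⟨hjn, heq⟩
      exact ⟨j', by by_cases hj : n = j' <;> simp [phase, hjn, hj, hne.symm, Complex.ext_iff]⟩
    by_cases hjn' : j = n'
    · have hne : j' ≠ n := fun heq ↦ h' ⟨hjn', heq⟩
      exact ⟨j', by by_cases hj : n' = j' <;> simp [phase, hjn', hj, hne.symm, Complex.ext_iff]⟩
    · refine ⟨j, ?_⟩
      by_cases hj : j' = j <;>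
        norm_num [phase, hj, Ne.symm hjn, Ne.symm hjn', Complex.ext_iff]
  by_contra moment_ne_zero
  exact hk (mul_eq_right₀ moment_ne_zero |>.mp
    (columnMoment_eq_phase_mul μ (phase_unit k) i m j j' n n').symm)

lemma columnMoment_self_eq (i m j k : ι) :
    columnMoment μ i m j j j j = columnMoment μ i m k k k k := by
  obtain ⟨V, hV⟩ := exists_unitaryGroup_row_eq (EuclideanSpace.single k (1 : ℂ)) (by simp) j
  rw [columnMoment_eq_sum μ V]
  simp [hV, apply_ite conj]

lemma columnMoment_eq_half_of_ne (i m : ι) {j k : ι} (hjk : j ≠ k) :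
    columnMoment μ i m j k j k = columnMoment μ i m j j j j / 2 := by
  -- A Pythagorean triple gives a unit vector with rational coordinates.
  let v : EuclideanSpace ℂ ι := EuclideanSpace.single j (3 / 5) + EuclideanSpace.single k (4 / 5)
  have norm_v : ‖v‖ = 1 := by
    have inner_eq_zero : inner ℂ (EuclideanSpace.single j (3 / 5 : ℂ))
        (EuclideanSpace.single k (4 / 5 : ℂ)) = 0 := by
      rw [EuclideanSpace.inner_single_left]
      simp [hjk]
    have norm_sq : ‖v‖ * ‖v‖ = 1 := by
      rw [norm_add_sq_eq_norm_sq_add_norm_sq_of_inner_eq_zero _ _ inner_eq_zero]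
      norm_num
    nlinarith [norm_nonneg v]
  have conj_v (a : ι) : conj (v a) = v a := by
    simp [v, apply_ite conj, map_ofNat]
  have sum_v_mul (f : ι → ℂ) : ∑ a, v a * f a = 3 / 5 * f j + 4 / 5 * f k := by
    simp [v, add_mul, Finset.sum_add_distrib]
  obtain ⟨V, hV⟩ := exists_unitaryGroup_row_eq v norm_v j
  have expansion := columnMoment_eq_sum μ V i m j j j j
  simp only [hV, conj_v, mul_assoc, ← Finset.mul_sum, sum_v_mul] at expansion
  simp only [hjk, and_false, not_false_eq_true, and_true, columnMoment_eq_zero μ i m, mul_zero,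
    add_zero, and_self, hjk.symm, zero_add] at expansion
  rw [columnMoment_swap_left μ i m k j j k, columnMoment_swap_left μ i m k j k j,
    columnMoment_swap_right μ i m j k k j, columnMoment_self_eq μ i m k j] at expansion
  linear_combination (-625 / 576) * expansion

lemma columnMoment_eq_mul_half (i m j j' n n' l : ι) :
    columnMoment μ i m j j' n n' =
      ((if j = n ∧ j' = n' then 1 else 0) + if j = n' ∧ j' = n then 1 else 0) *
        (columnMoment μ i m l l l l / 2) := by
  rw [columnMoment_self_eq μ i m l j]
  by_cases h : j = n ∧ j' = n'
  · obtain ⟨rfl, rfl⟩ := h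
    by_cases hj : j = j'
    · subst hj
      simp only [and_self, if_true]
      ring
    · simp [hj, columnMoment_eq_half_of_ne]
  by_cases h' : j = n' ∧ j' = n
  · obtain ⟨rfl, rfl⟩ := h'
    rw [columnMoment_swap_right, columnMoment_eq_half_of_ne μ i m fun heq ↦ h ⟨heq, heq.symm⟩]
    simp [h]
  · simp [h, h', columnMoment_eq_zero]

end LeftInvariant

variable (μ : Measure (unitaryGroup ι ℂ)) [IsProbabilityMeasure μ] [μ.IsMulLeftInvariant]

lemma columnMoment_self (i m j : ι) :
    columnMoment μ i m j j j j =
      2 / (Fintype.card ι * (Fintype.card ι + 1)) * if i = m then 1 else 0 := by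
  have card_ne_zero : (Fintype.card ι : ℂ) ≠ 0 := by
    exact_mod_cast (Fintype.card_pos_iff.mpr ⟨j⟩).ne'
  have card_add_one_ne_zero : (Fintype.card ι : ℂ) + 1 ≠ 0 := by
    exact_mod_cast (Fintype.card ι).succ_ne_zero
  have total : Fintype.card ι * (Fintype.card ι + 1) * (columnMoment μ i m j j j j / 2) =
      if i = m then 1 else 0 := by
    calc _ = ∑ a : ι, ∑ b : ι, (1 + if a = b then 1 else 0) * (columnMoment μ i m j j j j / 2) := by
          simp only [add_mul, ite_mul, one_mul, zero_mul, Finset.sum_add_distrib, Finset.sum_const,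
            Finset.sum_ite_eq, Finset.mem_univ, if_true, Finset.card_univ, nsmul_eq_mul]
          ring
      _ = ∑ a, ∑ b, columnMoment μ i m a b a b := by
          refine Finset.sum_congr rfl fun a _ ↦ Finset.sum_congr rfl fun b _ ↦ ?_
          simp [columnMoment_eq_mul_half μ i m a b a b j, eq_comm (a := b)]
      _ = if i = m then 1 else 0 := sum_columnMoment μ i m
  rw [← total]
  field_simp

theorem haar_unitary_entry_fourth_moment_general (i m j j' n n' : ι) :
    ∫ U : unitaryGroup ι ℂ, U.1 j i * U.1 j' i * (conj (U.1 n m) * conj (U.1 n' m)) ∂μ =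
      ((if j = n ∧ j' = n' then 1 else 0) + if j = n' ∧ j' = n then 1 else 0) /
        (Fintype.card ι * (Fintype.card ι + 1)) * if i = m then 1 else 0 := by
  refine (columnMoment_eq_mul_half μ i m j j' n n' j).trans ?_
  rw [columnMoment_self]
  ring

end ColumnMoments

/-- **A fourth moment of Haar-random unitary matrix entries.**
For `d ≥ 2` and indices `i, j, m, n`,
`∫_{U(d)} (U_{ji})² (conj U_{nm})² dμ(U) = (2/(d(d+1)))·δ_{jn}·δ_{im}`. -/
theorem haar_unitary_entry_fourth_moment
    (d : ℕ) (hd : 2 ≤ d) (i j m n : Fin d)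
    (μ : Measure (Matrix.unitaryGroup (Fin d) ℂ))
    [μ.IsHaarMeasure] [IsProbabilityMeasure μ] :
    ∫ U : Matrix.unitaryGroup (Fin d) ℂ,
        ((U : Matrix (Fin d) (Fin d) ℂ) j i) ^ 2 *
          (starRingEnd ℂ ((U : Matrix (Fin d) (Fin d) ℂ) n m)) ^ 2 ∂μ
      = (2 / ((d : ℂ) * (d + 1))) * (if j = n then 1 else 0) * (if i = m then 1 else 0) := by
  have : BorelSpace (unitaryGroup (Fin d) ℂ) := ⟨rfl⟩
  convert haar_unitary_entry_fourth_moment_general μ i m j j n n using 1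
  · simp only [sq]
  · grind [Fintype.card_fin]
end
end
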